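/- Let f be a strictly convex standard self-concordant function on ℝⁿ, x a point with Newton decrement λ(x) < 1, H := ∇²f(x), P an n×N matrix of full column rank, H_r := Pᵀ H P, and Q the coarse truncated approximation of H_r with parameter p. Let λ̂ := (∇f(x)ᵀ P Q⁻¹ Pᵀ ∇f(x))^{1/2}, d̂ := −P Q⁻¹ Pᵀ ∇f(x), and x⁺ := x + d̂ (unit step). Then λ(x⁺) ≤ [√(λ(x)² − λ̂²) + λ(x)²] / (1 − λ(x))². -/

import Mathlib

open Matrix

/-- The Bernstein–Szegő inequality for binary cubic forms, via a positive three-node quadrature. -/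
theorem abs_mul_add_mul_le_of_cubic_bound {a b g h M : ℝ}
    (hM : ∀ x y : ℝ, x ^ 2 + y ^ 2 = 1 →
      |x ^ 3 * a + 3 * x ^ 2 * y * b + 3 * x * y ^ 2 * g + y ^ 3 * h| ≤ M)
    (φ : ℝ) : |Real.cos φ * a + Real.sin φ * b| ≤ M := by
  obtain ⟨θ, rfl⟩ : ∃ θ, φ = 3 * θ := ⟨φ / 3, by ring⟩
  rw [Real.cos_three_mul, Real.sin_three_mul]
  have hcs := Real.cos_sq_add_sin_sq θ
  set c := Real.cos θ
  set s := Real.sin θ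
  obtain ⟨r, hr⟩ : ∃ r : ℝ, r ^ 2 = 3 := ⟨√3, by norm_num⟩
  have h0 := abs_le.1 (hM c s hcs)
  have h1 := abs_le.1 (hM ((c - r * s) / 2) ((s + r * c) / 2) (by linear_combination hcs + (s ^ 2 + c ^ 2) / 4 * hr))
  have h2 := abs_le.1 (hM ((-c - r * s) / 2) ((-s + r * c) / 2) (by linear_combination hcs + (s ^ 2 + c ^ 2) / 4 * hr))
  set p0 := c ^ 3 * a + 3 * c ^ 2 * s * b + 3 * c * s ^ 2 * g + s ^ 3 * h with hp0
  set p1 := ((c - r * s) / 2) ^ 3 * a + 3 * ((c - r * s) / 2) ^ 2 * ((s + r * c) / 2) * b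
    + 3 * ((c - r * s) / 2) * ((s + r * c) / 2) ^ 2 * g + ((s + r * c) / 2) ^ 3 * h with hp1
  set p2 := ((-c - r * s) / 2) ^ 3 * a + 3 * ((-c - r * s) / 2) ^ 2 * ((-s + r * c) / 2) * b
    + 3 * ((-c - r * s) / 2) * ((-s + r * c) / 2) ^ 2 * g + ((-s + r * c) / 2) ^ 3 * h with hp2
  have hs2 : s ^ 2 = 1 - c ^ 2 := by linarith
  have w : (4 * c ^ 2 - 1) ^ 2 / 9 + ((c - r * s) ^ 2 - 1) ^ 2 / 9 + ((c + r * s) ^ 2 - 1) ^ 2 / 9 = 1 := by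
    grind
  have key : (4 * c ^ 3 - 3 * c) * a + (3 * s - 4 * s ^ 3) * b
      = (4 * c ^ 2 - 1) ^ 2 / 9 * p0 - ((c - r * s) ^ 2 - 1) ^ 2 / 9 * p1
        + ((c + r * s) ^ 2 - 1) ^ 2 / 9 * p2 := by
    have ha : (4 * c ^ 3 - 3 * c) = (4 * c ^ 2 - 1) ^ 2 / 9 * c ^ 3 - ((c - r * s) ^ 2 - 1) ^ 2 / 9 * ((c - r * s) / 2) ^ 3 + ((c + r * s) ^ 2 - 1) ^ 2 / 9 * ((-c - r * s) / 2) ^ 3 := by grind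
    have hb : (3 * s - 4 * s ^ 3) = (4 * c ^ 2 - 1) ^ 2 / 9 * (3 * c ^ 2 * s) - ((c - r * s) ^ 2 - 1) ^ 2 / 9 * (3 * ((c - r * s) / 2) ^ 2 * ((s + r * c) / 2)) + ((c + r * s) ^ 2 - 1) ^ 2 / 9 * (3 * ((-c - r * s) / 2) ^ 2 * ((-s + r * c) / 2)) := by grind
    have hg : 0 = (4 * c ^ 2 - 1) ^ 2 / 9 * (3 * c * s ^ 2) - ((c - r * s) ^ 2 - 1) ^ 2 / 9 * (3 * ((c - r * s) / 2) * ((s + r * c) / 2) ^ 2) + ((c + r * s) ^ 2 - 1) ^ 2 / 9 * (3 * ((-c - r * s) / 2) * ((-s + r * c) / 2) ^ 2) := by grind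
    have hh : 0 = (4 * c ^ 2 - 1) ^ 2 / 9 * (s ^ 3) - ((c - r * s) ^ 2 - 1) ^ 2 / 9 * (((s + r * c) / 2) ^ 3) + ((c + r * s) ^ 2 - 1) ^ 2 / 9 * (((-s + r * c) / 2) ^ 3) := by grind
    rw [hp0, hp1, hp2]
    linear_combination a * ha + b * hb + g * hg + h * hh
  rw [key]
  clear_value p0 p1 p2
  generalize hw0 : (4 * c ^ 2 - 1) ^ 2 / 9 = w0 at *
  generalize hw1 : ((c - r * s) ^ 2 - 1) ^ 2 / 9 = w1 at *
  generalize hw2 : ((c + r * s) ^ 2 - 1) ^ 2 / 9 = w2 at *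
  have n0 : 0 ≤ w0 := by rw [← hw0]; positivity
  have n1 : 0 ≤ w1 := by rw [← hw1]; positivity
  have n2 : 0 ≤ w2 := by rw [← hw2]; positivity
  have e : M = w0 * M + w1 * M + w2 * M := by rw [← add_mul, ← add_mul, w, one_mul]
  rw [abs_le]
  constructor
  · nlinarith [mul_le_mul_of_nonneg_left h0.1 n0, mul_le_mul_of_nonneg_left h1.2 n1, mul_le_mul_of_nonneg_left h2.1 n2]
  · nlinarith [mul_le_mul_of_nonneg_left h0.2 n0, mul_le_mul_of_nonneg_left h1.1 n1, mul_le_mul_of_nonneg_left h2.2 n2]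

theorem sq_add_sq_le_of_cubic_bound {a b g h M : ℝ}
    (hM : ∀ x y : ℝ, x ^ 2 + y ^ 2 = 1 →
      |x ^ 3 * a + 3 * x ^ 2 * y * b + 3 * x * y ^ 2 * g + y ^ 3 * h| ≤ M) :
    √(a ^ 2 + b ^ 2) ≤ M := by
  have h1 := abs_mul_add_mul_le_of_cubic_bound hM (Complex.arg ⟨a, b⟩)
  have h2 : ‖(⟨a, b⟩ : ℂ)‖ = √(a ^ 2 + b ^ 2) := by
    rw [Complex.norm_def, Complex.normSq_mk]; ring_nf
  have h3 := Complex.norm_mul_cos_arg ⟨a, b⟩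
  have h4 := Complex.norm_mul_sin_arg ⟨a, b⟩
  rw [h2] at h3 h4
  simp only at h3 h4
  generalize √(a ^ 2 + b ^ 2) = r at *
  clear h2
  generalize Complex.arg ⟨a, b⟩ = φ at *
  have h5 := Real.cos_sq_add_sin_sq φ
  calc r = Real.cos φ * a + Real.sin φ * b := by
        rw [← h3, ← h4]
        linear_combination (-r) * h5
    _ ≤ M := (le_abs_self _).trans h1

theorem abs_trilinear_le_of_diagonal_le {E : Type*} [NormedAddCommGroup E] [NormedSpace ℝ E]
    (A : E →L[ℝ] E →L[ℝ] E →L[ℝ] ℝ) (B : E →L[ℝ] E →L[ℝ] ℝ)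
    (hA : ∀ u v w, A u v w = A v u w) (hA' : ∀ u v w, A u v w = A u w v)
    (hB : ∀ u v, B u v = B v u) (hpos : ∀ v, v ≠ 0 → 0 < B v v)
    (hAB : ∀ v, |A v v v| ≤ 2 * (B v v * √(B v v))) (u v : E) :
    |A u v v| ≤ 2 * (√(B u u) * B v v) := by
  have hnn : ∀ v, 0 ≤ B v v := fun v => by
    rcases eq_or_ne v 0 with rfl | h
    · simp
    · exact (hpos v h).le
  have horth : ∀ e₁ e₂ : E, B e₁ e₁ = 1 → B e₁ e₂ = 0 → B e₂ e₂ ≤ 1 →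
      √((A e₁ e₁ e₁) ^ 2 + (A e₂ e₁ e₁) ^ 2) ≤ 2 := by
    intro e₁ e₂ h11 h12 h22
    refine sq_add_sq_le_of_cubic_bound (g := A e₁ e₂ e₂) (h := A e₂ e₂ e₂) fun s t hst => ?_
    have h21 : B e₂ e₁ = 0 := by rw [hB, h12]
    have hle : B (s • e₁ + t • e₂) (s • e₁ + t • e₂) ≤ 1 := by
      simp only [map_add, map_smul, _root_.add_apply, _root_.smul_apply,
        smul_eq_mul, h11, h12, h21]
      nlinarith [sq_nonneg t]
    have hcub : A (s • e₁ + t • e₂) (s • e₁ + t • e₂) (s • e₁ + t • e₂) =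
        s ^ 3 * A e₁ e₁ e₁ + 3 * s ^ 2 * t * A e₂ e₁ e₁ + 3 * s * t ^ 2 * A e₁ e₂ e₂
          + t ^ 3 * A e₂ e₂ e₂ := by
      simp only [map_add, map_smul, _root_.add_apply, _root_.smul_apply,
        smul_eq_mul]
      rw [hA e₁ e₂ e₁, hA' e₁ e₁ e₂, hA e₁ e₂ e₁, hA' e₂ e₂ e₁, hA e₂ e₁ e₂]
      ring
    rw [← hcub]
    refine (hAB _).trans ?_
    have h0 := hnn (s • e₁ + t • e₂)
    have := mul_le_one₀ hle (Real.sqrt_nonneg _) (Real.sqrt_le_one.2 hle)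
    linarith
  rcases eq_or_ne v 0 with rfl | hv
  · simp
  have hv' := hpos v hv
  set m := √(B v v) with hm
  have hm0 : 0 < m := Real.sqrt_pos.2 hv'
  have hmm : m ^ 2 = B v v := Real.sq_sqrt hv'.le
  set e₁ := m⁻¹ • v with he₁
  have hve : v = m • e₁ := by rw [he₁, smul_smul, mul_inv_cancel₀ hm0.ne', one_smul]
  have h11 : B e₁ e₁ = 1 := by
    rw [he₁]
    simp only [map_smul, _root_.smul_apply, smul_eq_mul, ← hmm]
    field_simp
  set α := B e₁ u with hα
  set z := u - α • e₁ with hz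
  have hez : B e₁ z = 0 := by
    rw [hz]; simp only [map_sub, map_smul, smul_eq_mul, h11, ← hα]; ring
  set β := √(B z z) with hβ
  have hββ : β ^ 2 = B z z := Real.sq_sqrt (hnn z)
  have hzβ : z = β • β⁻¹ • z := by
    rcases eq_or_ne z 0 with h | h
    · rw [h]; simp
    · have : 0 < β := Real.sqrt_pos.2 (hpos z h)
      rw [smul_smul, mul_inv_cancel₀ this.ne', one_smul]
  set e₂ := β⁻¹ • z with he₂
  have h12 : B e₁ e₂ = 0 := by
    rw [he₂, map_smul, hez, smul_zero]
  have h22 : B e₂ e₂ ≤ 1 := by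
    rw [he₂]
    simp only [map_smul, _root_.smul_apply, smul_eq_mul, ← hββ]
    rcases eq_or_ne β 0 with h | h
    · simp [h]
    · apply le_of_eq; field_simp
  have hu : u = α • e₁ + z := by rw [hz]; abel
  have huu : B u u = α ^ 2 + β ^ 2 := by
    have hze : B z e₁ = 0 := by rw [hB, hez]
    rw [hu]
    simp only [map_add, map_smul, _root_.add_apply, _root_.smul_apply,
      smul_eq_mul, h11, hez, hze, hββ]
    ring
  have hAu : A u v v = m ^ 2 * (α * A e₁ e₁ e₁ + β * A e₂ e₁ e₁) := by
    rw [hu, hzβ]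
    nth_rw 1 [hve]
    nth_rw 1 [hve]
    simp only [map_add, map_smul, _root_.add_apply, _root_.smul_apply,
      smul_eq_mul]
    ring
  have hcs : |α * A e₁ e₁ e₁ + β * A e₂ e₁ e₁| ≤
      √(α ^ 2 + β ^ 2) * √((A e₁ e₁ e₁) ^ 2 + (A e₂ e₁ e₁) ^ 2) := by
    rw [← Real.sqrt_mul (by positivity)]
    apply Real.abs_le_sqrt
    nlinarith [sq_nonneg (α * A e₂ e₁ e₁ - β * A e₁ e₁ e₁)]
  rw [hAu, huu, ← hmm, abs_mul, abs_of_nonneg (sq_nonneg m)]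
  calc m ^ 2 * |α * A e₁ e₁ e₁ + β * A e₂ e₁ e₁|
      ≤ m ^ 2 * (√(α ^ 2 + β ^ 2) * 2) := by
        gcongr
        exact hcs.trans (by gcongr; exact horth e₁ e₂ h11 h12 h22)
    _ = 2 * (√(α ^ 2 + β ^ 2) * m ^ 2) := by ring

/-- The first three derivatives of a strictly convex standard self-concordant function. -/
structure IsSelfConcordantJet {E : Type*} [NormedAddCommGroup E] [NormedSpace ℝ E]
    (F₁ : E → E →L[ℝ] ℝ) (F₂ : E → E →L[ℝ] E →L[ℝ] ℝ)
    (F₃ : E → E →L[ℝ] E →L[ℝ] E →L[ℝ] ℝ) : Prop where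
  hasFDerivAt_fst : ∀ y, HasFDerivAt F₁ (F₂ y) y
  hasFDerivAt_snd : ∀ y, HasFDerivAt F₂ (F₃ y) y
  symm_snd : ∀ y u v, F₂ y u v = F₂ y v u
  symm_left : ∀ y u v w, F₃ y u v w = F₃ y v u w
  symm_right : ∀ y u v w, F₃ y u v w = F₃ y u w v
  pos : ∀ y v, v ≠ 0 → 0 < F₂ y v v
  bound : ∀ y v, |F₃ y v v v| ≤ 2 * (F₂ y v v * √(F₂ y v v))

namespace IsSelfConcordantJet

variable {E : Type*} [NormedAddCommGroup E] [NormedSpace ℝ E]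
  {F₁ : E → E →L[ℝ] ℝ} {F₂ : E → E →L[ℝ] E →L[ℝ] ℝ} {F₃ : E → E →L[ℝ] E →L[ℝ] E →L[ℝ] ℝ}

theorem nonneg (h : IsSelfConcordantJet F₁ F₂ F₃) (y v : E) : 0 ≤ F₂ y v v := by
  rcases eq_or_ne v 0 with rfl | hv
  · simp
  · exact (h.pos y v hv).le

theorem abs_mixed_le (h : IsSelfConcordantJet F₁ F₂ F₃) (y u v : E) :
    |F₃ y u v v| ≤ 2 * (√(F₂ y u u) * F₂ y v v) :=
  abs_trilinear_le_of_diagonal_le (F₃ y) (F₂ y) (h.symm_left y) (h.symm_right y) (h.symm_snd y)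
    (h.pos y) (h.bound y) u v

theorem hasDerivAt_line (x d : E) (t : ℝ) : HasDerivAt (fun t : ℝ => x + t • d) d t := by
  simpa using ((hasDerivAt_id t).smul_const d).const_add x

theorem hasDerivAt_fst (h : IsSelfConcordantJet F₁ F₂ F₃) (x d w : E) (t : ℝ) :
    HasDerivAt (fun t : ℝ => F₁ (x + t • d) w) (F₂ (x + t • d) d w) t := by
  have h1 := (h.hasFDerivAt_fst (x + t • d)).comp_hasDerivAt t (hasDerivAt_line x d t)
  simpa using h1.clm_apply (hasDerivAt_const t w)

theorem hasDerivAt_snd (h : IsSelfConcordantJet F₁ F₂ F₃) (x d v w : E) (t : ℝ) :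
    HasDerivAt (fun t : ℝ => F₂ (x + t • d) v w) (F₃ (x + t • d) d v w) t := by
  have h1 : HasDerivAt (fun t : ℝ => F₂ (x + t • d)) (F₃ (x + t • d) d) t :=
    HasFDerivAt.comp_hasDerivAt (l := F₂) t (h.hasFDerivAt_snd (x + t • d))
      (hasDerivAt_line x d t)
  simpa using (h1.clm_apply (hasDerivAt_const t v)).clm_apply (hasDerivAt_const t w)

theorem le_of_deriv_nonpos {g g' : ℝ → ℝ} {t : ℝ} (ht0 : 0 ≤ t) (ht1 : t ≤ 1)
    (hg : ∀ s ∈ Set.Icc (0 : ℝ) 1, HasDerivAt g (g' s) s)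
    (hg' : ∀ s ∈ Set.Icc (0 : ℝ) 1, g' s ≤ 0) : g t ≤ g 0 := by
  have : AntitoneOn g (Set.Icc 0 1) :=
    antitoneOn_of_hasDerivWithinAt_nonpos (f' := g') (convex_Icc 0 1)
      (fun s hs => (hg s hs).continuousAt.continuousWithinAt)
      (fun s hs => (hg s (interior_subset hs)).hasDerivWithinAt)
      (fun s hs => hg' s (interior_subset hs))
  exact this (by simp) ⟨ht0, ht1⟩ ht0

theorem one_sub_mul_pos {r t : ℝ} (hr0 : 0 ≤ r) (hr1 : r < 1) (ht1 : t ≤ 1) : 0 < 1 - t * r := by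
  nlinarith

theorem sqrt_line_le (h : IsSelfConcordantJet F₁ F₂ F₃) (x d : E) {t : ℝ}
    (hr1 : √(F₂ x d d) < 1) (ht0 : 0 ≤ t) (ht1 : t ≤ 1) :
    √(F₂ (x + t • d) d d) ≤ √(F₂ x d d) / (1 - t * √(F₂ x d d)) := by
  rcases eq_or_ne d 0 with rfl | hd
  · simp
  have hs : ∀ s : ℝ, 0 < √(F₂ (x + s • d) d d) := fun s => Real.sqrt_pos.2 (h.pos _ d hd)
  have key := le_of_deriv_nonpos (g := fun s => -(√(F₂ (x + s • d) d d))⁻¹ - s)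
    (g' := fun s => -(-(F₃ (x + s • d) d d d / (2 * √(F₂ (x + s • d) d d)))
      / √(F₂ (x + s • d) d d) ^ 2) - 1) ht0 ht1
    (fun s _ => (((h.hasDerivAt_snd x d d d s).sqrt (h.pos _ d hd).ne').fun_inv
      (hs s).ne').neg.sub (hasDerivAt_id s))
    (fun s _ => by
      have hb := (abs_le.1 (h.bound (x + s • d) d)).2
      have hp := hs s
      have hsq := Real.sq_sqrt (h.nonneg (x + s • d) d)
      set q := √(F₂ (x + s • d) d d)
      rw [← hsq] at hb
      have : F₃ (x + s • d) d d d / (2 * q) / q ^ 2 ≤ 1 := by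
        rw [div_div, div_le_one (by positivity)]
        linarith
      rw [neg_div, neg_neg]
      linarith)
  have hp0 := hs 0
  have hpt := hs t
  simp only [zero_smul, add_zero, sub_zero] at key hp0
  set r := √(F₂ x d d)
  set q := √(F₂ (x + t • d) d d)
  have h1 := one_sub_mul_pos hp0.le hr1 ht1
  rw [le_div_iff₀ h1]
  have h2 : r⁻¹ - t ≤ q⁻¹ := by linarith
  have h3 := mul_le_mul_of_nonneg_left h2 (mul_pos hp0 hpt).le
  have h4 : r * q * (r⁻¹ - t) = q * (1 - t * r) := by field_simp
  have h5 : r * q * q⁻¹ = r := by field_simp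
  linarith

theorem abs_deriv_hess_le (h : IsSelfConcordantJet F₁ F₂ F₃) (x d v : E) {t : ℝ}
    (hr1 : √(F₂ x d d) < 1) (ht0 : 0 ≤ t) (ht1 : t ≤ 1) :
    |F₃ (x + t • d) d v v| * (1 - t * √(F₂ x d d)) ≤
      2 * √(F₂ x d d) * F₂ (x + t • d) v v := by
  have h1 := one_sub_mul_pos (Real.sqrt_nonneg _) hr1 ht1
  have h2 := (le_div_iff₀ h1).1 (h.sqrt_line_le x d hr1 ht0 ht1)
  have h3 := h.abs_mixed_le (x + t • d) d v
  calc _ ≤ 2 * (√(F₂ (x + t • d) d d) * F₂ (x + t • d) v v) * (1 - t * √(F₂ x d d)) := by gcongr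
    _ = 2 * (√(F₂ (x + t • d) d d) * (1 - t * √(F₂ x d d))) * F₂ (x + t • d) v v := by ring
    _ ≤ _ := by
      have := h.nonneg (x + t • d) v
      gcongr

theorem hasDerivAt_one_sub_mul (r s : ℝ) : HasDerivAt (fun s : ℝ => 1 - s * r) (-r) s := by
  simpa using ((hasDerivAt_id s).mul_const r).const_sub 1

theorem hess_line_le (h : IsSelfConcordantJet F₁ F₂ F₃) (x d v : E) {t : ℝ}
    (hr1 : √(F₂ x d d) < 1) (ht0 : 0 ≤ t) (ht1 : t ≤ 1) :
    F₂ (x + t • d) v v * (1 - t * √(F₂ x d d)) ^ 2 ≤ F₂ x v v := by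
  have key := le_of_deriv_nonpos
    (g := fun s => F₂ (x + s • d) v v * (1 - s * √(F₂ x d d)) ^ 2) ht0 ht1
    (fun s _ => (h.hasDerivAt_snd x d v v s).mul ((hasDerivAt_one_sub_mul _ s).fun_pow 2))
    (fun s hs => by
      have h1 := one_sub_mul_pos (Real.sqrt_nonneg _) hr1 hs.2
      have h2 := h.abs_deriv_hess_le x d v hr1 hs.1 hs.2
      have h3 := mul_le_mul_of_nonneg_right (le_abs_self (F₃ (x + s • d) d v v)) h1.le
      have h4 := mul_le_mul_of_nonneg_right (h3.trans h2) h1.le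
      norm_num
      linarith)
  simpa using key

theorem le_hess_line (h : IsSelfConcordantJet F₁ F₂ F₃) (x d v : E) {t : ℝ}
    (hr1 : √(F₂ x d d) < 1) (ht0 : 0 ≤ t) (ht1 : t ≤ 1) :
    F₂ x v v * (1 - t * √(F₂ x d d)) ^ 2 ≤ F₂ (x + t • d) v v := by
  have hne : ∀ s ∈ Set.Icc (0 : ℝ) 1, (1 - s * √(F₂ x d d)) ^ 2 ≠ 0 := fun s hs =>
    (pow_pos (one_sub_mul_pos (Real.sqrt_nonneg _) hr1 hs.2) 2).ne'
  have key := le_of_deriv_nonpos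
    (g := fun s => -(F₂ (x + s • d) v v / (1 - s * √(F₂ x d d)) ^ 2)) ht0 ht1
    (fun s hs => ((h.hasDerivAt_snd x d v v s).fun_div ((hasDerivAt_one_sub_mul _ s).fun_pow 2)
      (hne s hs)).neg)
    (fun s hs => by
      have h1 := one_sub_mul_pos (Real.sqrt_nonneg _) hr1 hs.2
      have h2 := h.abs_deriv_hess_le x d v hr1 hs.1 hs.2
      have h3 := mul_le_mul_of_nonneg_right (neg_abs_le (F₃ (x + s • d) d v v)) h1.le
      have h4 : 0 ≤ F₃ (x + s • d) d v v * (1 - s * √(F₂ x d d))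
        + 2 * √(F₂ x d d) * F₂ (x + s • d) v v := by linarith
      have h5 := mul_nonneg h4 h1.le
      rw [neg_nonpos]
      apply div_nonneg _ (by positivity)
      norm_num
      linarith)
  have h1 := one_sub_mul_pos (Real.sqrt_nonneg _) hr1 ht1
  simp only [zero_smul, add_zero, zero_mul, sub_zero, one_pow, div_one, neg_le_neg_iff] at key
  exact (le_div_iff₀ (by positivity)).1 key

theorem hess_apply_line_sub_le (h : IsSelfConcordantJet F₁ F₂ F₃) (x d w : E) {t : ℝ}
    (hr1 : √(F₂ x d d) < 1) (ht0 : 0 ≤ t) (ht1 : t ≤ 1) :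
    F₂ (x + t • d) d w - F₂ x d w ≤
      √(F₂ x w w) * √(F₂ x d d) * (((1 - t * √(F₂ x d d)) ^ 2)⁻¹ - 1) := by
  have hne : ∀ s ∈ Set.Icc (0 : ℝ) 1, (1 - s * √(F₂ x d d)) ^ 2 ≠ 0 := fun s hs =>
    (pow_pos (one_sub_mul_pos (Real.sqrt_nonneg _) hr1 hs.2) 2).ne'
  have key := le_of_deriv_nonpos
    (g := fun s => F₂ (x + s • d) d w -
      √(F₂ x w w) * √(F₂ x d d) * ((1 - s * √(F₂ x d d)) ^ 2)⁻¹) ht0 ht1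
    (fun s hs => (h.hasDerivAt_snd x d d w s).sub
      ((((hasDerivAt_one_sub_mul _ s).fun_pow 2).fun_inv (hne s hs)).const_mul _))
    (fun s hs => by
      have h1 := one_sub_mul_pos (Real.sqrt_nonneg _) hr1 hs.2
      have h2 := (le_abs_self _).trans (h.abs_mixed_le (x + s • d) w d)
      rw [h.symm_left, h.symm_right] at h2
      have h3 := h.hess_line_le x d d hr1 hs.1 hs.2
      have h4 := h.hess_line_le x d w hr1 hs.1 hs.2
      have h5 : √(F₂ (x + s • d) w w) * (1 - s * √(F₂ x d d)) ≤ √(F₂ x w w) := by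
        apply Real.le_sqrt_of_sq_le
        rwa [mul_pow, Real.sq_sqrt (h.nonneg _ _)]
      have h6 := Real.sq_sqrt (h.nonneg x d)
      set r := √(F₂ x d d)
      set c := 1 - s * r
      rw [← h6] at h3
      have h7 := mul_le_mul h5 h3 (by have := h.nonneg (x + s • d) d; positivity)
        (Real.sqrt_nonneg _)
      have h8 := mul_le_mul_of_nonneg_right h2 (pow_pos h1 3).le
      have h9 : √(F₂ x w w) * r * (-(2 * c * -r) / (c ^ 2) ^ 2) * c ^ 3 =
          2 * (√(F₂ x w w) * r ^ 2) := by field_simp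
      norm_num at h9 ⊢
      refine le_of_mul_le_mul_right ?_ (pow_pos h1 3)
      rw [h9]
      linarith)
  simp only [zero_smul, add_zero, zero_mul, sub_zero, one_pow, inv_one, mul_one] at key
  linarith

theorem grad_add_sub_le (h : IsSelfConcordantJet F₁ F₂ F₃) (x d w : E)
    (hr1 : √(F₂ x d d) < 1) :
    F₁ (x + d) w - F₁ x w - F₂ x d w ≤
      √(F₂ x w w) * (√(F₂ x d d) ^ 2 / (1 - √(F₂ x d d))) := by
  have hne : ∀ s ∈ Set.Icc (0 : ℝ) 1, 1 - s * √(F₂ x d d) ≠ 0 := fun s hs =>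
    (one_sub_mul_pos (Real.sqrt_nonneg _) hr1 hs.2).ne'
  have key := le_of_deriv_nonpos
    (g := fun s => F₁ (x + s • d) w - s * F₂ x d w -
      √(F₂ x w w) * ((1 - s * √(F₂ x d d))⁻¹ - s * √(F₂ x d d))) zero_le_one le_rfl
    (fun s hs => ((h.hasDerivAt_fst x d w s).sub ((hasDerivAt_id s).mul_const _)).sub
      ((((hasDerivAt_one_sub_mul _ s).fun_inv (hne s hs)).sub
        ((hasDerivAt_id s).mul_const _)).const_mul _))
    (fun s hs => by
      have h1 := h.hess_apply_line_sub_le x d w hr1 hs.1 hs.2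
      have h2 : - -√(F₂ x d d) / (1 - s * √(F₂ x d d)) ^ 2 =
        √(F₂ x d d) * ((1 - s * √(F₂ x d d)) ^ 2)⁻¹ := by rw [neg_neg, div_eq_mul_inv]
      rw [h2]
      linarith)
  have h1 := hne 1 (by simp)
  simp only [one_smul, one_mul, zero_smul, add_zero, zero_mul, sub_zero, inv_one, mul_one]
    at key h1
  have h2 : √(F₂ x d d) ^ 2 / (1 - √(F₂ x d d)) =
      (1 - √(F₂ x d d))⁻¹ - √(F₂ x d d) - 1 := by field_simp; ring
  rw [h2]
  linarith

end IsSelfConcordantJet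

section LineDerivatives

variable {E : Type*} [NormedAddCommGroup E] [NormedSpace ℝ E] {f : E → ℝ}

theorem hasDerivAt_comp_line (hf : ContDiff ℝ 3 f) (x u : E) (t : ℝ) :
    HasDerivAt (fun s : ℝ => f (x + s • u)) (fderiv ℝ f (x + t • u) u) t :=
  ((hf.differentiable (by norm_num)).differentiableAt.hasFDerivAt (x := x + t • u)).comp_hasDerivAt
    t (IsSelfConcordantJet.hasDerivAt_line x u t)

theorem hasFDerivAt_fderiv (hf : ContDiff ℝ 3 f) (y : E) :
    HasFDerivAt (fderiv ℝ f) (fderiv ℝ (fderiv ℝ f) y) y :=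
  ((hf.fderiv_right (m := 2) (by norm_num)).differentiable (by norm_num)).differentiableAt.hasFDerivAt

theorem hasFDerivAt_fderiv_fderiv (hf : ContDiff ℝ 3 f) (y : E) :
    HasFDerivAt (fderiv ℝ (fderiv ℝ f)) (fderiv ℝ (fderiv ℝ (fderiv ℝ f)) y) y :=
  (((hf.fderiv_right (m := 2) (by norm_num)).fderiv_right (m := 1) (by norm_num)).differentiable
    (by norm_num)).differentiableAt.hasFDerivAt

theorem iteratedDeriv_two_comp_line (hf : ContDiff ℝ 3 f) (x u : E) (t : ℝ) :
    iteratedDeriv 2 (fun s : ℝ => f (x + s • u)) t =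
      fderiv ℝ (fderiv ℝ f) (x + t • u) u u := by
  have h1 : deriv (fun s : ℝ => f (x + s • u)) = fun s => fderiv ℝ f (x + s • u) u :=
    funext fun s => (hasDerivAt_comp_line hf x u s).deriv
  rw [iteratedDeriv_succ, iteratedDeriv_one, h1]
  have h2 : HasDerivAt (fun s : ℝ => fderiv ℝ f (x + s • u))
      (fderiv ℝ (fderiv ℝ f) (x + t • u) u) t :=
    HasFDerivAt.comp_hasDerivAt (l := fderiv ℝ f) t (hasFDerivAt_fderiv hf _)
      (IsSelfConcordantJet.hasDerivAt_line x u t)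
  simpa using (h2.clm_apply (hasDerivAt_const t u)).deriv

theorem iteratedDeriv_three_comp_line (hf : ContDiff ℝ 3 f) (x u : E) (t : ℝ) :
    iteratedDeriv 3 (fun s : ℝ => f (x + s • u)) t =
      fderiv ℝ (fderiv ℝ (fderiv ℝ f)) (x + t • u) u u u := by
  rw [iteratedDeriv_succ, funext (iteratedDeriv_two_comp_line hf x u)]
  have h2 : HasDerivAt (fun s : ℝ => fderiv ℝ (fderiv ℝ f) (x + s • u))
      (fderiv ℝ (fderiv ℝ (fderiv ℝ f)) (x + t • u) u) t :=
    HasFDerivAt.comp_hasDerivAt (l := fderiv ℝ (fderiv ℝ f)) t (hasFDerivAt_fderiv_fderiv hf _)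
      (IsSelfConcordantJet.hasDerivAt_line x u t)
  simpa using ((h2.clm_apply (hasDerivAt_const t u)).clm_apply (hasDerivAt_const t u)).deriv

theorem fderiv_fderiv_symm (hf : ContDiff ℝ 3 f) (y u v : E) :
    fderiv ℝ (fderiv ℝ f) y u v = fderiv ℝ (fderiv ℝ f) y v u :=
  second_derivative_symmetric
    (fun z => ((hf.differentiable (by norm_num)) z).hasFDerivAt) (hasFDerivAt_fderiv hf y) u v

theorem isSelfConcordantJet_fderiv (hf : ContDiff ℝ 3 f)
    (hpos : ∀ y v, v ≠ 0 → 0 < fderiv ℝ (fderiv ℝ f) y v v)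
    (hsc : ∀ x u : E, ∀ t : ℝ,
      |iteratedDeriv 3 (fun s : ℝ => f (x + s • u)) t|
        ≤ 2 * iteratedDeriv 2 (fun s : ℝ => f (x + s • u)) t ^ ((3 : ℝ) / 2)) :
    IsSelfConcordantJet (fderiv ℝ f) (fderiv ℝ (fderiv ℝ f))
      (fderiv ℝ (fderiv ℝ (fderiv ℝ f))) where
  hasFDerivAt_fst := hasFDerivAt_fderiv hf
  hasFDerivAt_snd := hasFDerivAt_fderiv_fderiv hf
  symm_snd := fderiv_fderiv_symm hf
  symm_left y u v w := by
    rw [second_derivative_symmetric (hasFDerivAt_fderiv hf) (hasFDerivAt_fderiv_fderiv hf y) u v]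
  symm_right y u v w := by
    have key : ∀ a b : E, HasDerivAt (fun t : ℝ => fderiv ℝ (fderiv ℝ f) (y + t • u) a b)
        (fderiv ℝ (fderiv ℝ (fderiv ℝ f)) y u a b) 0 := fun a b => by
      have h2 : HasDerivAt (fun s : ℝ => fderiv ℝ (fderiv ℝ f) (y + s • u))
          (fderiv ℝ (fderiv ℝ (fderiv ℝ f)) (y + (0 : ℝ) • u) u) 0 :=
        HasFDerivAt.comp_hasDerivAt (l := fderiv ℝ (fderiv ℝ f)) 0
          (hasFDerivAt_fderiv_fderiv hf _) (IsSelfConcordantJet.hasDerivAt_line y u 0)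
      simpa using (h2.clm_apply (hasDerivAt_const 0 a)).clm_apply (hasDerivAt_const 0 b)
    have h1 := key v w
    rw [funext fun t : ℝ => fderiv_fderiv_symm hf (y + t • u) v w] at h1
    exact h1.unique (key w v)
  pos := hpos
  bound y v := by
    have h1 := hsc y v 0
    rw [iteratedDeriv_three_comp_line hf, iteratedDeriv_two_comp_line hf, zero_smul, add_zero]
      at h1
    refine h1.trans (le_of_eq ?_)
    rcases eq_or_ne v 0 with rfl | hv
    · simp
    · rw [show (3 : ℝ) / 2 = 1 + 1 / 2 by norm_num, Real.rpow_add (hpos y v hv), Real.rpow_one,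
        Real.sqrt_eq_rpow]

end LineDerivatives

section Truncation

variable {ι : Type*} [Fintype ι] [DecidableEq ι]

theorem eq_transpose_mul_diagonal_mul {u : ι → ι → ℝ} {s : ι → ℝ} {M : Matrix ι ι ℝ}
    (hortho : ∀ i j, u i ⬝ᵥ u j = if i = j then (1 : ℝ) else 0)
    (hM : ∀ i, M *ᵥ u i = s i • u i) :
    M = (Matrix.of u)ᵀ * diagonal s * Matrix.of u := by
  have h1 : Matrix.of u * (Matrix.of u)ᵀ = 1 := by
    ext i j
    simpa [Matrix.mul_apply, dotProduct, Matrix.one_apply] using hortho i j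
  have h2 : (Matrix.of u)ᵀ * Matrix.of u = 1 := mul_eq_one_comm.1 h1
  have h3 : M * (Matrix.of u)ᵀ = (Matrix.of u)ᵀ * diagonal s := by
    ext i j
    have := congrFun (hM j) i
    simpa [Matrix.mul_apply, mulVec, dotProduct, Matrix.diagonal, mul_comm] using this
  rw [← h3, Matrix.mul_assoc, h2, Matrix.mul_one]

theorem dotProduct_mulVec_eq_sum {u : ι → ι → ℝ} {s : ι → ℝ} {M : Matrix ι ι ℝ}
    (hortho : ∀ i j, u i ⬝ᵥ u j = if i = j then (1 : ℝ) else 0)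
    (hM : ∀ i, M *ᵥ u i = s i • u i) (y : ι → ℝ) :
    y ⬝ᵥ (M *ᵥ y) = ∑ i, s i * (u i ⬝ᵥ y) ^ 2 := by
  rw [eq_transpose_mul_diagonal_mul hortho hM, ← Matrix.mulVec_mulVec, ← Matrix.mulVec_mulVec,
    Matrix.dotProduct_mulVec, Matrix.vecMul_transpose, dotProduct]
  refine Finset.sum_congr rfl fun i _ => ?_
  rw [Matrix.mulVec_diagonal]
  change (u i ⬝ᵥ y) * (s i * (u i ⬝ᵥ y)) = _
  ring

theorem isUnit_det_of_orthonormal_eigenvectors {u : ι → ι → ℝ} {s : ι → ℝ} {M : Matrix ι ι ℝ}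
    (hortho : ∀ i j, u i ⬝ᵥ u j = if i = j then (1 : ℝ) else 0)
    (hM : ∀ i, M *ᵥ u i = s i • u i) (hs : ∀ i, s i ≠ 0) : IsUnit M.det := by
  have h1 : Matrix.of u * (Matrix.of u)ᵀ = 1 := by
    ext i j
    simpa [Matrix.mul_apply, dotProduct, Matrix.one_apply] using hortho i j
  have h2 := congrArg Matrix.det h1
  rw [Matrix.det_mul, Matrix.det_one] at h2
  rw [isUnit_iff_ne_zero, eq_transpose_mul_diagonal_mul hortho hM, Matrix.det_mul, Matrix.det_mul,
    Matrix.det_diagonal]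
  have h3 := left_ne_zero_of_mul_eq_one h2
  have h4 := right_ne_zero_of_mul_eq_one h2
  exact mul_ne_zero (mul_ne_zero h4 (Finset.prod_ne_zero_iff.2 fun i _ => hs i)) h3

end Truncation

/-- Cauchy–Schwarz for the inner product of a positive definite matrix. -/
theorem Matrix.PosDef.dotProduct_mulVec_le {ι : Type*} [Fintype ι] {H : Matrix ι ι ℝ}
    (hH : H.PosDef) (a b : ι → ℝ) :
    a ⬝ᵥ (H *ᵥ b) ≤ √(a ⬝ᵥ (H *ᵥ a)) * √(b ⬝ᵥ (H *ᵥ b)) := by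
  have hs : Hᵀ = H := by simpa using hH.isHermitian.eq
  have hnn : ∀ v : ι → ℝ, 0 ≤ v ⬝ᵥ (H *ᵥ v) := fun v => by
    simpa using hH.posSemidef.dotProduct_mulVec_nonneg v
  have hba : b ⬝ᵥ (H *ᵥ a) = a ⬝ᵥ (H *ᵥ b) := by
    rw [Matrix.dotProduct_mulVec, ← Matrix.mulVec_transpose, hs, dotProduct_comm]
  rw [← Real.sqrt_mul (hnn a)]
  apply Real.le_sqrt_of_sq_le
  have h := discrim_le_zero (a := b ⬝ᵥ (H *ᵥ b)) (b := 2 * (a ⬝ᵥ (H *ᵥ b)))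
    (c := a ⬝ᵥ (H *ᵥ a)) fun t => by
      have := hnn (a + t • b)
      simp only [Matrix.mulVec_add, Matrix.mulVec_smul, add_dotProduct, dotProduct_add,
        smul_dotProduct, dotProduct_smul, smul_eq_mul, hba] at this
      linarith
  rw [discrim] at h
  linarith

/-- Let `f` be strictly convex standard self-concordant, `x`
a point with Newton decrement `λ(x) < 1`, `H := ∇²f(x)`, `P` an `n×N` matrix
of full column rank, `H_r := Pᵀ H P`, `Q` the coarse truncated approximation
of `H_r` with parameter `p`, `λ̂ = (∇f(x)ᵀ P Q⁻¹ Pᵀ ∇f(x))^{1/2}`,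
`d̂ = −P Q⁻¹ Pᵀ ∇f(x)` and `x⁺ := x + d̂` (unit step).  Then
`λ(x⁺) ≤ [√(λ(x)² − λ̂²) + λ(x)²] / (1 − λ(x))²`. -/
theorem stmt17 {n N p : ℕ} (hp : 1 ≤ p) (hpN : p < N) (hNn : N < n)
    (f : (Fin n → ℝ) → ℝ) (grad : (Fin n → ℝ) → Fin n → ℝ)
    (hess : (Fin n → ℝ) → Matrix (Fin n) (Fin n) ℝ)
    (hf : ContDiff ℝ 3 f)
    (hconv : StrictConvexOn ℝ Set.univ f)
    (hgrad : ∀ x u : Fin n → ℝ, deriv (fun t : ℝ => f (x + t • u)) 0 = grad x ⬝ᵥ u)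
    (hhessq : ∀ x u : Fin n → ℝ,
      iteratedDeriv 2 (fun t : ℝ => f (x + t • u)) 0 = u ⬝ᵥ (hess x *ᵥ u))
    (hhsymm : ∀ x, (hess x).IsSymm)
    (hhpd : ∀ x, (hess x).PosDef)
    (hsc : ∀ x u : Fin n → ℝ, ∀ t : ℝ,
      |iteratedDeriv 3 (fun s : ℝ => f (x + s • u)) t|
        ≤ 2 * iteratedDeriv 2 (fun s : ℝ => f (x + s • u)) t ^ ((3 : ℝ) / 2))
    (hclosed : ∀ c : ℝ, IsClosed {x | f x ≤ c})
    (hbdd : BddBelow (Set.range f))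
    (x : Fin n → ℝ)
    (P : Matrix (Fin n) (Fin N) ℝ) (hP : P.rank = N)
    (σ : Fin N → ℝ) (u : Fin N → Fin N → ℝ)
    (hσpos : ∀ i, 0 < σ i)
    (hσmono : ∀ i j : Fin N, i ≤ j → σ j ≤ σ i)
    (hortho : ∀ i j : Fin N, u i ⬝ᵥ u j = if i = j then (1 : ℝ) else 0)
    (hHreig : ∀ i, (Pᵀ * hess x * P) *ᵥ u i = σ i • u i)
    (Q : Matrix (Fin N) (Fin N) ℝ) (hQsymm : Q.IsSymm)
    (hQeig : ∀ i : Fin N, Q *ᵥ u i = (if (i : ℕ) < p then σ i else σ ⟨p, hpN⟩) • u i)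
    (lam : ℝ) (hlam : lam = Real.sqrt (grad x ⬝ᵥ ((hess x)⁻¹ *ᵥ grad x)))
    (hlam1 : lam < 1)
    (lamhat : ℝ)
    (hlamhat : lamhat = Real.sqrt (grad x ⬝ᵥ (P *ᵥ (Q⁻¹ *ᵥ (Pᵀ *ᵥ grad x))))) :
    Real.sqrt (grad (x + -(P *ᵥ (Q⁻¹ *ᵥ (Pᵀ *ᵥ grad x)))) ⬝ᵥ
        ((hess (x + -(P *ᵥ (Q⁻¹ *ᵥ (Pᵀ *ᵥ grad x)))))⁻¹ *ᵥ
          grad (x + -(P *ᵥ (Q⁻¹ *ᵥ (Pᵀ *ᵥ grad x))))))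
      ≤ (Real.sqrt (lam ^ 2 - lamhat ^ 2) + lam ^ 2) / (1 - lam) ^ 2 := by
  have hH2 : ∀ y v w, fderiv ℝ (fderiv ℝ f) y v w = v ⬝ᵥ (hess y *ᵥ w) := by
    intro y v w
    have hq : ∀ v, fderiv ℝ (fderiv ℝ f) y v v = v ⬝ᵥ (hess y *ᵥ v) := fun v => by
      rw [← hhessq, iteratedDeriv_two_comp_line hf, zero_smul, add_zero]
    have h1 := hq (v + w)
    have hwv : w ⬝ᵥ (hess y *ᵥ v) = v ⬝ᵥ (hess y *ᵥ w) := by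
      rw [Matrix.dotProduct_mulVec, ← Matrix.mulVec_transpose, (hhsymm y).eq, dotProduct_comm]
    simp only [map_add, _root_.add_apply, Matrix.mulVec_add, add_dotProduct,
      dotProduct_add, hq, hwv, fderiv_fderiv_symm hf y w v] at h1
    linarith
  have hG : ∀ y v, fderiv ℝ f y v = grad y ⬝ᵥ v := fun y v => by
    rw [← hgrad, (hasDerivAt_comp_line hf y v 0).deriv, zero_smul, add_zero]
  have hjet := isSelfConcordantJet_fderiv hf
    (fun y v hv => by rw [hH2]; simpa using (hhpd y).dotProduct_mulVec_pos hv) hsc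
  have hnn : ∀ y v, 0 ≤ v ⬝ᵥ (hess y *ᵥ v) := fun y v => by
    rw [← hH2]; exact hjet.nonneg y v
  have hinv : ∀ y, hess y *ᵥ ((hess y)⁻¹ *ᵥ grad y) = grad y := fun y => by
    rw [Matrix.mulVec_mulVec, Matrix.mul_nonsing_inv _ ((Matrix.isUnit_iff_isUnit_det _).1
      (hhpd y).isUnit), Matrix.one_mulVec]
  have hdec : ∀ y, grad y ⬝ᵥ ((hess y)⁻¹ *ᵥ grad y) =
      ((hess y)⁻¹ *ᵥ grad y) ⬝ᵥ (hess y *ᵥ ((hess y)⁻¹ *ᵥ grad y)) := fun y => by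
    rw [hinv, dotProduct_comm]
  -- the truncated matrix dominates the reduced Hessian
  set q : Fin N → ℝ := fun i => if (i : ℕ) < p then σ i else σ ⟨p, hpN⟩ with hq
  have hqpos : ∀ i, 0 < q i := fun i => by
    simp only [hq]; split_ifs <;> exact hσpos _
  have hσq : ∀ i, σ i ≤ q i := fun i => by
    simp only [hq]
    split_ifs with hi
    · exact le_rfl
    · exact hσmono _ _ (Fin.le_def.2 (not_lt.1 hi))
  set y := Q⁻¹ *ᵥ (Pᵀ *ᵥ grad x) with hy
  have hQy : Q *ᵥ y = Pᵀ *ᵥ grad x := by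
    rw [hy, Matrix.mulVec_mulVec, Matrix.mul_nonsing_inv _
      (isUnit_det_of_orthonormal_eigenvectors hortho hQeig fun i => (hqpos i).ne'),
      Matrix.one_mulVec]
  set d := -(P *ᵥ y) with hd
  set m := grad x ⬝ᵥ (P *ᵥ y) with hm
  have hmQ : m = y ⬝ᵥ (Q *ᵥ y) := by
    rw [hQy, hm, Matrix.dotProduct_mulVec, Matrix.mulVec_transpose, dotProduct_comm]
  have hm0 : 0 ≤ m := by
    rw [hmQ, dotProduct_mulVec_eq_sum hortho hQeig]
    exact Finset.sum_nonneg fun i _ => mul_nonneg (hqpos i).le (sq_nonneg _)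
  have hdm : d ⬝ᵥ (hess x *ᵥ d) ≤ m := by
    have h1 : d ⬝ᵥ (hess x *ᵥ d) = y ⬝ᵥ ((Pᵀ * hess x * P) *ᵥ y) := by
      rw [hd, Matrix.mulVec_neg, neg_dotProduct_neg, ← Matrix.mulVec_mulVec,
        ← Matrix.mulVec_mulVec, Matrix.dotProduct_mulVec y, Matrix.vecMul_transpose]
    rw [h1, hmQ, dotProduct_mulVec_eq_sum hortho hQeig, dotProduct_mulVec_eq_sum hortho hHreig]
    exact Finset.sum_le_sum fun i _ => mul_le_mul_of_nonneg_right (hσq i) (sq_nonneg _)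
  have hlam0 : 0 ≤ lam := hlam ▸ Real.sqrt_nonneg _
  have hlam2 : lam ^ 2 = ((hess x)⁻¹ *ᵥ grad x) ⬝ᵥ (hess x *ᵥ ((hess x)⁻¹ *ᵥ grad x)) := by
    rw [hlam, hdec, Real.sq_sqrt (hnn _ _)]
  have hhat2 : lamhat ^ 2 = m := by rw [hlamhat, Real.sq_sqrt hm0]
  rw [hhat2]
  set k := (hess x)⁻¹ *ᵥ grad x with hk
  have hgd : grad x ⬝ᵥ d = -m := by rw [hd, dotProduct_neg]
  have hkd : (k + d) ⬝ᵥ (hess x *ᵥ (k + d)) ≤ lam ^ 2 - m := by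
    have h1 : k ⬝ᵥ (hess x *ᵥ d) = -m := by
      rw [Matrix.dotProduct_mulVec, ← Matrix.mulVec_transpose, (hhsymm x).eq, hinv, hgd]
    have h2 : d ⬝ᵥ (hess x *ᵥ k) = -m := by rw [hinv, dotProduct_comm, hgd]
    simp only [Matrix.mulVec_add, add_dotProduct, dotProduct_add, h1, h2, ← hlam2]
    linarith
  have hmlam : m ≤ lam ^ 2 := by linarith [hnn x (k + d)]
  set r := √(d ⬝ᵥ (hess x *ᵥ d)) with hr
  have hr0 : 0 ≤ r := Real.sqrt_nonneg _
  have hrlam : r ≤ lam := Real.sqrt_le_iff.2 ⟨hlam0, hdm.trans hmlam⟩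
  have hr1 : r < 1 := hrlam.trans_lt hlam1
  -- the new gradient, tested against the Newton direction at the new point
  set w := (hess (x + d))⁻¹ *ᵥ grad (x + d) with hw
  have hmain := hjet.grad_add_sub_le x d w (by rwa [hH2])
  have hloc := hjet.le_hess_line x d w (by rwa [hH2]) zero_le_one le_rfl
  have hcs := (hhpd x).dotProduct_mulVec_le (k + d) w
  have hkw : (k + d) ⬝ᵥ (hess x *ᵥ w) = grad x ⬝ᵥ w + d ⬝ᵥ (hess x *ᵥ w) := by
    rw [add_dotProduct, Matrix.dotProduct_mulVec k, ← Matrix.mulVec_transpose, (hhsymm x).eq, hinv]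
  simp only [one_smul, one_mul, hH2, hG, ← hr] at hmain hloc
  have hdec' := hdec (x + d)
  rw [← hw] at hdec'
  rw [← hdec'] at hloc
  rw [hkw] at hcs
  have hμ0 : 0 ≤ grad (x + d) ⬝ᵥ w := by rw [hdec']; exact hnn _ _
  set μ := √(grad (x + d) ⬝ᵥ w) with hμ
  have hμ2 : μ ^ 2 = grad (x + d) ⬝ᵥ w := Real.sq_sqrt hμ0
  have hμn : 0 ≤ μ := Real.sqrt_nonneg _
  set ω := √(w ⬝ᵥ (hess x *ᵥ w)) with hω
  have hω0 : 0 ≤ ω := Real.sqrt_nonneg _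
  have hωμ : ω * (1 - r) ≤ μ := by
    apply Real.le_sqrt_of_sq_le
    rwa [mul_pow, Real.sq_sqrt (hnn x w)]
  set S := √(lam ^ 2 - m) with hS
  have hS0 : 0 ≤ S := Real.sqrt_nonneg _
  have hcs' : √((k + d) ⬝ᵥ (hess x *ᵥ (k + d))) * ω ≤ S * ω :=
    mul_le_mul_of_nonneg_right (Real.sqrt_le_sqrt hkd) hω0
  have h1r : 0 < 1 - r := by linarith
  have h1l : 0 < 1 - lam := by linarith
  have hB0 : 0 ≤ S + r ^ 2 / (1 - r) := by positivity
  have hfin : μ ^ 2 ≤ ω * (S + r ^ 2 / (1 - r)) := by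
    rw [hμ2]; linarith
  have hfin2 : μ * (1 - r) ≤ S + r ^ 2 / (1 - r) := by
    rcases hμn.eq_or_lt with h0 | h0
    · rw [← h0, zero_mul]; exact hB0
    · refine le_of_mul_le_mul_left ?_ h0
      calc μ * (μ * (1 - r)) = μ ^ 2 * (1 - r) := by ring
        _ ≤ ω * (S + r ^ 2 / (1 - r)) * (1 - r) := by gcongr
        _ = ω * (1 - r) * (S + r ^ 2 / (1 - r)) := by ring
        _ ≤ μ * (S + r ^ 2 / (1 - r)) := by gcongr
  rw [le_div_iff₀ (by positivity)]
  calc μ * (1 - lam) ^ 2 ≤ μ * (1 - r) ^ 2 := by gcongr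
    _ = μ * (1 - r) * (1 - r) := by ring
    _ ≤ (S + r ^ 2 / (1 - r)) * (1 - r) := by gcongr
    _ = S * (1 - r) + r ^ 2 := by field_simp
    _ ≤ S + lam ^ 2 := by
      have : S * (1 - r) ≤ S := mul_le_of_le_one_right hS0 (by linarith)
      have : r ^ 2 ≤ lam ^ 2 := by gcongr
      linarith
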